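/- Fix j ≥ 1, assume λ_1 > λ_2 > ⋯ > λ_j > λ_{j+1} ≥ λ_{j+2} ≥ ⋯ > 0, and assume ⟨ψ_0, φ_j⟩ ≠ 0. Let γ_j = (λ_j − λ_{j+1})/λ_{j+1}. Then there exists a constant C ≥ 0 such that for every k > j there exists φ̂ in the Krylov subspace K_k(T, ψ_0) = span{ψ_0, Tψ_0, …, T^{k−1}ψ_0} with ‖φ̂ − φ_j‖ ≤ C (1/(1 + 4γ_j))^k. (Convergence of the localized Krylov subspace iteration.) -/

import Mathlib

open scoped RealInnerProductSpace

open Polynomial in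
theorem cheb_lower (g : ℝ) (hg : 0 ≤ g) (n : ℕ) :
    (1 + 4 * g) ^ n / 2 ≤ (Chebyshev.T ℝ n).eval (1 + 2 * g) := by
  have hx : (1 : ℝ) ≤ 1 + 2 * g := by linarith
  have h1 := Chebyshev.T_real_cosh (Real.arcosh (1 + 2 * g)) n
  rw [Real.cosh_arcosh hx] at h1
  rw [h1, Real.cosh_eq]
  have h2 : 1 + 4 * g ≤ Real.exp (Real.arcosh (1 + 2 * g)) := by
    rw [Real.exp_arcosh hx]
    have : 2 * g ≤ √((1 + 2 * g) ^ 2 - 1) := by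
      apply Real.le_sqrt_of_sq_le
      nlinarith
    linarith
  have h3 : (1 + 4 * g) ^ n ≤ Real.exp (((n : ℤ) : ℝ) * Real.arcosh (1 + 2 * g)) := by
    rw [Int.cast_natCast, Real.exp_nat_mul]
    gcongr
  have h4 := Real.exp_pos (-(((n : ℤ) : ℝ) * Real.arcosh (1 + 2 * g)))
  linarith

theorem norm_le_of_coeff {H : Type*} [NormedAddCommGroup H] [InnerProductSpace ℝ H]
    [CompleteSpace H] (φ : HilbertBasis ℕ ℝ H) (v w : H) (M : ℝ) (hM : 0 ≤ M)
    (h : ∀ m, |⟪φ m, v⟫| ≤ M * |⟪φ m, w⟫|) : ‖v‖ ≤ M * ‖w‖ := by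
  have hv := φ.hasSum_inner_mul_inner v v
  have hw := (φ.hasSum_inner_mul_inner w w).mul_left (M ^ 2)
  have hle := hasSum_le (fun m => ?_) hv hw
  · rw [real_inner_self_eq_norm_sq, real_inner_self_eq_norm_sq, ← mul_pow] at hle
    exact le_of_sq_le_sq hle (by positivity)
  · rw [real_inner_comm (φ m) v, real_inner_comm (φ m) w]
    have := pow_le_pow_left₀ (abs_nonneg _) (h m) 2
    rw [mul_pow, sq_abs, sq_abs] at this
    nlinarith

theorem inner_aeval {H : Type*} [NormedAddCommGroup H] [InnerProductSpace ℝ H]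
    [CompleteSpace H] (T : H →L[ℝ] H) (hTsa : IsSelfAdjoint T) (u : H) (l : ℝ)
    (hu : T u = l • u) (w : H) (p : Polynomial ℝ) :
    ⟪u, Polynomial.aeval T p w⟫ = p.eval l * ⟪u, w⟫ := by
  have hpow : ∀ n : ℕ, ⟪u, (T ^ n) w⟫ = l ^ n * ⟪u, w⟫ := by
    intro n
    induction n with
    | zero => simp
    | succ n ih =>
      have hs : ⟪T u, (T ^ n) w⟫ = ⟪u, T ((T ^ n) w)⟫ := hTsa.isSymmetric u ((T ^ n) w)
      rw [pow_succ', ContinuousLinearMap.mul_apply, ← hs, hu, real_inner_smul_left, ih]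
      ring
  rw [Polynomial.aeval_eq_sum_range, Polynomial.eval_eq_sum_range, ContinuousLinearMap.sum_apply,
    inner_sum, Finset.sum_mul]
  refine Finset.sum_congr rfl fun i _ => ?_
  rw [ContinuousLinearMap.smul_apply, real_inner_smul_right, hpow]
  ring

theorem aeval_mem_krylov {H : Type*} [NormedAddCommGroup H] [InnerProductSpace ℝ H]
    (T : H →L[ℝ] H) (w : H) (p : Polynomial ℝ) (k : ℕ) (hk : p.natDegree < k) :
    Polynomial.aeval T p w ∈ Submodule.span ℝ (Set.range fun i : Fin k => (T ^ (i : ℕ)) w) := by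
  rw [Polynomial.aeval_eq_sum_range' hk, ContinuousLinearMap.sum_apply]
  refine Submodule.sum_mem _ fun i hi => ?_
  rw [ContinuousLinearMap.smul_apply]
  exact Submodule.smul_mem _ _ (Submodule.subset_span ⟨⟨i, Finset.mem_range.1 hi⟩, rfl⟩)

/-- Convergence of the localized Krylov subspace iteration: if the leading
eigenvalues are simple down to the target index `j` (indexed from `0`) and the
initial vector `ψ0` has a nonzero component along `φ j`, then the Krylov spaces
contain approximations of `φ j` with error `C (1/(1+4γ_j))ᵏ`, where
`γ_j = (λ_j - λ_{j+1})/λ_{j+1}`. -/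
theorem stmt_3 {H : Type*} [NormedAddCommGroup H] [InnerProductSpace ℝ H] [CompleteSpace H]
    (T : H →L[ℝ] H) (hTsa : IsSelfAdjoint T) (hTc : IsCompactOperator ⇑T)
    (φ : HilbertBasis ℕ ℝ H) (lam : ℕ → ℝ)
    (heig : ∀ j, T (φ j) = lam j • φ j) (hpos : ∀ j, 0 < lam j) (hmono : Antitone lam)
    (ψ0 : H) (j : ℕ)
    (hstrict : ∀ m ≤ j, lam (m + 1) < lam m)
    (hcomp : ⟪ψ0, φ j⟫ ≠ 0) :
    ∃ C : ℝ, 0 ≤ C ∧ ∀ k : ℕ, j < k →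
      ∃ φhat ∈ Submodule.span ℝ (Set.range fun i : Fin k => (T ^ (i : ℕ)) ψ0),
        ‖φhat - φ j‖ ≤ C * (1 / (1 + 4 * ((lam j - lam (j + 1)) / lam (j + 1)))) ^ k := by
  classical
  set g : ℝ := (lam j - lam (j + 1)) / lam (j + 1) with hg
  have hL := hpos (j + 1)
  have hg0 : 0 ≤ g := div_nonneg (sub_nonneg.2 (hstrict j le_rfl).le) hL.le
  set R : ℝ := 1 + 4 * g with hR
  have hR0 : 0 < R := by linarith
  have hlt : ∀ i < j, lam j < lam i := fun i hi =>
    lt_of_le_of_lt (hmono (Nat.succ_le_of_lt hi)) (hstrict i hi.le)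
  set P : Polynomial ℝ := ∏ i ∈ Finset.range j, (Polynomial.X - Polynomial.C (lam i)) with hP
  have hPeval : ∀ x, P.eval x = ∏ i ∈ Finset.range j, (x - lam i) := by
    intro x; simp [hP, Polynomial.eval_prod]
  have hPj : P.eval (lam j) ≠ 0 := by
    rw [hPeval, Finset.prod_ne_zero_iff]
    intro i hi
    exact (sub_neg.2 (hlt i (Finset.mem_range.1 hi))).ne
  have hPdeg : P.natDegree = j := by
    rw [hP, Polynomial.natDegree_prod_of_monic _ _ fun i _ => Polynomial.monic_X_sub_C _]
    simp
  have hPzero : ∀ m < j, P.eval (lam m) = 0 := by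
    intro m hm
    rw [hPeval]
    exact Finset.prod_eq_zero (Finset.mem_range.2 hm) (sub_self _)
  have hPbd : ∀ m, |P.eval (lam m)| ≤ lam 0 ^ j := by
    intro m
    rw [hPeval, Finset.abs_prod]
    refine (Finset.prod_le_prod (g := fun _ => lam 0) (fun _ _ => abs_nonneg _) fun i _ => ?_).trans
      (by simp)
    have h1 := hmono (Nat.zero_le m)
    have h2 := hmono (Nat.zero_le i)
    rw [abs_le]
    constructor <;> linarith [hpos m, hpos i]
  have hcomp' : ⟪φ j, ψ0⟫ ≠ 0 := by rwa [real_inner_comm]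
  set D : ℝ := P.eval (lam j) * ⟪φ j, ψ0⟫ with hD
  have hD0 : D ≠ 0 := mul_ne_zero hPj hcomp'
  have hl0 := hpos 0
  refine ⟨lam 0 ^ j / |D| * 2 * R ^ (j + 1) * ‖ψ0‖, by positivity, fun k hk => ?_⟩
  obtain ⟨n, rfl⟩ : ∃ n, k = n + (j + 1) := ⟨k - (j + 1), by omega⟩
  set t : Polynomial ℝ := (Polynomial.Chebyshev.T ℝ n).comp
    (Polynomial.C (2 / lam (j + 1)) * Polynomial.X - Polynomial.C 1) with ht
  have hteval : ∀ x, t.eval x = (Polynomial.Chebyshev.T ℝ n).eval (2 / lam (j + 1) * x - 1) := by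
    intro x; simp [ht]
  have htdeg : t.natDegree ≤ n := by
    rw [ht, Polynomial.natDegree_comp, Polynomial.Chebyshev.natDegree_T, Int.natAbs_natCast]
    have h1 : (Polynomial.C (2 / lam (j + 1)) * Polynomial.X - Polynomial.C 1).natDegree ≤ 1 := by
      rw [Polynomial.natDegree_sub_C]
      exact (Polynomial.natDegree_C_mul_le _ _).trans Polynomial.natDegree_X_le
    exact (Nat.mul_le_mul_left n h1).trans (by omega)
  have htj : R ^ n / 2 ≤ t.eval (lam j) := by
    rw [hteval]
    have : 2 / lam (j + 1) * lam j - 1 = 1 + 2 * g := by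
      rw [hg]; field_simp; ring
    rw [this]
    exact cheb_lower g hg0 n
  have htj0 : 0 < t.eval (lam j) := lt_of_lt_of_le (by positivity) htj
  have htm : ∀ m, j < m → |t.eval (lam m)| ≤ 1 := by
    intro m hm
    rw [hteval]
    apply Polynomial.Chebyshev.abs_eval_T_real_le_one
    have h1 : lam m / lam (j + 1) ≤ 1 := (div_le_one hL).2 (hmono (Nat.succ_le_of_lt hm))
    have h2 : 0 < lam m / lam (j + 1) := div_pos (hpos m) hL
    have h3 : 2 / lam (j + 1) * lam m - 1 = 2 * (lam m / lam (j + 1)) - 1 := by ring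
    rw [h3, abs_le]
    constructor <;> linarith
  set c : ℝ := (D * t.eval (lam j))⁻¹ with hc
  refine ⟨c • Polynomial.aeval T (P * t) ψ0, Submodule.smul_mem _ _
    (aeval_mem_krylov T ψ0 _ _ ?_), ?_⟩
  · have := Polynomial.natDegree_mul_le (p := P) (q := t)
    omega
  have hcabs : |c| ≤ 1 / |D| * 2 * (1 / R) ^ n := by
    have e : 1 / |D| * 2 * (1 / R) ^ n = 1 / (|D| * (R ^ n / 2)) := by
      rw [one_div_pow]; field_simp
    rw [e, hc, abs_inv, abs_mul, abs_of_pos htj0, ← one_div]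
    have := abs_pos.2 hD0
    gcongr
  have key : ‖c • Polynomial.aeval T (P * t) ψ0 - φ j‖ ≤ (|c| * lam 0 ^ j) * ‖ψ0‖ := by
    apply norm_le_of_coeff φ _ _ _ (by positivity)
    intro m
    rw [inner_sub_right, real_inner_smul_right, inner_aeval T hTsa (φ m) (lam m) (heig m),
      Polynomial.eval_mul]
    have horth := orthonormal_iff_ite.1 φ.orthonormal m j
    rw [horth]
    rcases lt_trichotomy m j with h | h | h
    · rw [hPzero m h, if_neg h.ne]
      simp only [zero_mul, mul_zero, sub_zero, abs_zero]
      positivity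
    · subst h
      have : c * (P.eval (lam m) * t.eval (lam m) * ⟪φ m, ψ0⟫) - 1 = 0 := by
        have : P.eval (lam m) * t.eval (lam m) * ⟪φ m, ψ0⟫ = D * t.eval (lam m) := by
          rw [hD]; ring
        rw [this, hc, inv_mul_cancel₀ (mul_ne_zero hD0 htj0.ne'), sub_self]
      rw [if_pos rfl, this, abs_zero]
      positivity
    · rw [if_neg h.ne', sub_zero, abs_mul, abs_mul, abs_mul, mul_assoc |c|]
      have : |P.eval (lam m)| * |t.eval (lam m)| ≤ lam 0 ^ j * 1 :=
        mul_le_mul (hPbd m) (htm m h) (abs_nonneg _) (by positivity)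
      rw [mul_one] at this
      gcongr
  refine key.trans ?_
  have e : lam 0 ^ j / |D| * 2 * R ^ (j + 1) * ‖ψ0‖ * (1 / R) ^ (n + (j + 1))
      = (1 / |D| * 2 * (1 / R) ^ n) * lam 0 ^ j * ‖ψ0‖ := by
    rw [pow_add (1 / R), one_div_pow R (j + 1)]; field_simp
  rw [e]
  gcongr
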